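/- Let M > 0 and let φ : [0,M] → [0,∞) be a measurable function that is continuous at Lebesgue-almost every point of [0,M] and integrable on [0,M]. Define Φ(z) = ∫_0^z φ(x) dx for z ∈ [0,M], and let Φ* be the greatest convex minorant of Φ on [0,M], i.e. Φ* is convex on [0,M], Φ* ≤ Φ on [0,M], and every convex function ρ on [0,M] with ρ ≤ Φ satisfies ρ ≤ Φ*. Let Φ*′ denote the right derivative of Φ*. Then for every nondecreasing right-continuous function ψ : [0,M] → [0,∞): ∫_0^M (φ(x) − ψ(x))² dx ≥ ∫_0^M (φ(x) − Φ*′(x))² dx + ∫_0^M (Φ*′(x) − ψ(x))² dx. -/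

import Mathlib

open MeasureTheory Filter Set

/-!
The cross term in `(φ - ψ)² = ((φ - Φ*') + (Φ*' - ψ))²` has nonnegative integral. By the layer cake
formula, integrating a monotone `h` against `φ - Φ*'`, which has total mass zero, gives an integral
over `t` of tails `∫_c^b (φ - Φ*') = Φ*(c) - Φ(c) ≤ 0`, where `c` is the point at which `h` crosses
the level `t`. With `h = ψ` this is nonpositive. With `h = Φ*'` it vanishes: wherever `Φ* < Φ` the
minorant is affine, so `Φ*'` is locally constant there and crosses no level. As `Φ*'` need not be
square integrable, it is truncated first and the truncation is removed by Fatou's lemma.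
-/

open scoped Topology

lemma integral_mul_eq_mul_integral_add_integral_superlevel {α : Type*} [MeasurableSpace α]
    {μ : Measure α} [SFinite μ] {f h : α → ℝ} {l u : ℝ} (hf : Integrable f μ)
    (hh : AEMeasurable h μ) (hb : ∀ᵐ x ∂μ, h x ∈ Icc l u) :
    ∫ x, f x * h x ∂μ = l * ∫ x, f x ∂μ + ∫ t in Ioc l u, ∫ x in {x | t < h x}, f x ∂μ := by
  have slice : ∀ᵐ x ∂μ,
      f x * h x = l * f x + ∫ t in Ioc l u, {x | t < h x}.indicator f x := by
    filter_upwards [hb] with x hx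
    have h_ind : (fun t ↦ {x | t < h x}.indicator f x) = (Iio (h x)).indicator fun _ ↦ f x := by
      ext t; simp [indicator]
    have h_inter : Ioc l u ∩ Iio (h x) = Ioo l (h x) := by
      ext t; exact ⟨fun ht ↦ ⟨ht.1.1, ht.2⟩, fun ht ↦ ⟨⟨ht.1, ht.2.le.trans hx.2⟩, ht.2⟩⟩
    rw [h_ind, setIntegral_indicator measurableSet_Iio, h_inter, setIntegral_const,
      Real.volume_real_Ioo_of_le hx.1, smul_eq_mul]
    ring
  have h_prod : Integrable (Function.uncurry fun x t ↦ {x | t < h x}.indicator f x)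
      (μ.prod (volume.restrict (Ioc l u))) := by
    have h_null : NullMeasurableSet {p : α × ℝ | p.2 < h p.1}
        (μ.prod (volume.restrict (Ioc l u))) :=
      nullMeasurableSet_lt measurable_snd.aemeasurable hh.comp_fst
    exact (hf.comp_fst _).indicator₀ h_null
  have h_inner : Integrable (fun x ↦ ∫ t in Ioc l u, {x | t < h x}.indicator f x) μ :=
    h_prod.integral_prod_left
  rw [integral_congr_ae slice, integral_add (hf.const_mul l) h_inner,
    integral_const_mul, integral_integral_swap h_prod]
  congr 2 with t
  exact integral_indicator₀ (nullMeasurableSet_lt aemeasurable_const hh)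

lemma exists_threshold_of_monotoneOn_Ioo {α β : Type*} [ConditionallyCompleteLinearOrder α]
    [LinearOrder β] {h : α → β} {a b : α} (hab : a ≤ b) (hh : MonotoneOn h (Ioo a b)) (t : β) :
    ∃ c ∈ Icc a b, (∀ x ∈ Ioo a c, h x ≤ t) ∧ ∀ x ∈ Ioo c b, t < h x := by
  set S := insert b {x ∈ Ioo a b | t < h x}
  have ha : a ∈ lowerBounds S := by
    rintro x (rfl | hx)
    exacts [hab, hx.1.1.le]
  have hbS : b ∈ S := mem_insert _ _
  have hcb : sInf S ≤ b := csInf_le ⟨a, ha⟩ hbS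
  refine ⟨sInf S, ⟨le_csInf ⟨b, hbS⟩ ha, hcb⟩, fun x hx ↦ ?_, fun x hx ↦ ?_⟩
  · by_contra! htx
    exact (csInf_le ⟨a, ha⟩ (mem_insert_of_mem _ ⟨⟨hx.1, hx.2.trans_le hcb⟩, htx⟩)).not_gt hx.2
  · obtain ⟨z, rfl | ⟨hz, htz⟩, hzx⟩ := exists_lt_of_csInf_lt ⟨b, hbS⟩ hx.1
    · exact absurd hzx hx.2.not_gt
    · exact htz.trans_le (hh hz ⟨hz.1.trans hzx, hx.2⟩ hzx.le)

lemma not_eventuallyConst_of_threshold {h : ℝ → ℝ} {a b c t : ℝ} (hc : c ∈ Ioo a b)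
    (hle : ∀ x ∈ Ioo a c, h x ≤ t) (hlt : ∀ x ∈ Ioo c b, t < h x) :
    ¬ EventuallyConst h (𝓝 c) := by
  intro hconst
  obtain ⟨s, hs⟩ := eventuallyConst_iff_exists_eventuallyEq.1 hconst
  obtain ⟨x, hxs, hx⟩ := ((hs.filter_mono nhdsWithin_le_nhds).and
    (Ioo_mem_nhdsLT hc.1)).exists
  obtain ⟨y, hys, hy⟩ := ((hs.filter_mono nhdsWithin_le_nhds).and
    (Ioo_mem_nhdsGT hc.2)).exists
  exact absurd (hlt y hy) (by rw [hys, ← hxs]; exact (hle x hx).not_gt)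

lemma setIntegral_superlevel_eq_setIntegral_Ioo {μ : Measure ℝ} [NullSingletonClass μ]
    {f h : ℝ → ℝ} {a b c t : ℝ}
    (hh : MonotoneOn h (Ioo a b)) (hac : a ≤ c) (hle : ∀ x ∈ Ioo a c, h x ≤ t)
    (hlt : ∀ x ∈ Ioo c b, t < h x) :
    ∫ x in {x | t < h x}, f x ∂μ.restrict (Ioo a b) = ∫ x in Ioo c b, f x ∂μ := by
  have h_null : NullMeasurableSet {x | t < h x} (μ.restrict (Ioo a b)) :=
    nullMeasurableSet_lt aemeasurable_const
      (aemeasurable_restrict_of_monotoneOn measurableSet_Ioo hh)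
  rw [Measure.restrict_restrict₀ h_null]
  refine setIntegral_congr_set ?_
  filter_upwards [Measure.ae_ne μ c] with x hxc
  refine propext ⟨fun hx ↦ ⟨?_, hx.2.2⟩, fun hx ↦ ⟨hlt x hx, hac.trans_lt hx.1, hx.2⟩⟩
  by_contra! hcx
  exact (hle x ⟨hx.2.1, hcx.lt_of_ne hxc⟩).not_gt hx.1

section Tails

variable {μ : Measure ℝ} [SFinite μ] {a b l u : ℝ} {f h : ℝ → ℝ}

lemma integral_mul_eq_integral_superlevel_of_integral_eq_zero (hf : IntegrableOn f (Ioo a b) μ)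
    (hf0 : ∫ x in Ioo a b, f x ∂μ = 0) (hh : MonotoneOn h (Ioo a b))
    (hb : ∀ x ∈ Ioo a b, h x ∈ Icc l u) :
    ∫ x in Ioo a b, f x * h x ∂μ =
      ∫ t in Ioc l u, ∫ x in {x | t < h x}, f x ∂μ.restrict (Ioo a b) := by
  rw [integral_mul_eq_mul_integral_add_integral_superlevel hf
    (aemeasurable_restrict_of_monotoneOn measurableSet_Ioo hh)
    ((ae_restrict_mem measurableSet_Ioo).mono hb), hf0, mul_zero, zero_add]

variable [NullSingletonClass μ]

lemma integral_mul_nonpos_of_monotoneOn (hab : a ≤ b) (hf : IntegrableOn f (Ioo a b) μ)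
    (hf0 : ∫ x in Ioo a b, f x ∂μ = 0) (htail : ∀ c ∈ Icc a b, ∫ x in Ioo c b, f x ∂μ ≤ 0)
    (hh : MonotoneOn h (Ioo a b)) (hb : ∀ x ∈ Ioo a b, h x ∈ Icc l u) :
    ∫ x in Ioo a b, f x * h x ∂μ ≤ 0 := by
  rw [integral_mul_eq_integral_superlevel_of_integral_eq_zero hf hf0 hh hb]
  refine integral_nonpos fun t ↦ ?_
  obtain ⟨c, hc, hle, hlt⟩ := exists_threshold_of_monotoneOn_Ioo hab hh t
  exact (setIntegral_superlevel_eq_setIntegral_Ioo hh hc.1 hle hlt).trans_le (htail c hc)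

lemma integral_mul_eq_zero_of_monotoneOn (hab : a ≤ b) (hf : IntegrableOn f (Ioo a b) μ)
    (hf0 : ∫ x in Ioo a b, f x ∂μ = 0)
    (hconst : ∀ c ∈ Ioo a b, ∫ x in Ioo c b, f x ∂μ ≠ 0 → EventuallyConst h (𝓝 c))
    (hh : MonotoneOn h (Ioo a b)) (hb : ∀ x ∈ Ioo a b, h x ∈ Icc l u) :
    ∫ x in Ioo a b, f x * h x ∂μ = 0 := by
  rw [integral_mul_eq_integral_superlevel_of_integral_eq_zero hf hf0 hh hb]
  refine integral_eq_zero_of_ae (.of_forall fun t ↦ ?_)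
  obtain ⟨c, hc, hle, hlt⟩ := exists_threshold_of_monotoneOn_Ioo hab hh t
  simp only [setIntegral_superlevel_eq_setIntegral_Ioo hh hc.1 hle hlt, Pi.zero_apply]
  rcases hc.1.eq_or_lt with rfl | hac
  · exact hf0
  rcases hc.2.eq_or_lt with rfl | hcb
  · simp only [Ioo_self, Measure.restrict_empty, integral_zero_measure]
  · by_contra hne
    exact not_eventuallyConst_of_threshold ⟨hac, hcb⟩ hle hlt (hconst c ⟨hac, hcb⟩ hne)

end Tails

section Secant

/-- The affine function interpolating `F` at `p` and `q`; it is the competitor against which the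
maximality of a greatest convex minorant is tested. -/
noncomputable def secant (F : ℝ → ℝ) (p q x : ℝ) : ℝ := F p + slope F p q * (x - p)

variable {F : ℝ → ℝ} {s : Set ℝ} {p q x : ℝ}

@[simp]
lemma secant_left : secant F p q p = F p := by simp [secant]

@[simp]
lemma secant_right : secant F p q q = F q := by
  have h := sub_smul_slope F p q
  rw [smul_eq_mul, vsub_eq_sub] at h
  rw [secant]
  linarith

lemma secant_sub_eq_mul_slope_sub_slope :
    secant F p q x - F x = (x - p) * (slope F p q - slope F p x) := by
  have h := sub_smul_slope F p x
  rw [smul_eq_mul, vsub_eq_sub] at h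
  rw [secant]
  linarith

lemma convexOn_secant (hs : Convex ℝ s) : ConvexOn ℝ s (secant F p q) := by
  refine ⟨hs, fun x _ y _ α β _ _ hαβ ↦ le_of_eq ?_⟩
  obtain rfl : β = 1 - α := by linarith
  simp only [secant, smul_eq_mul]
  ring

lemma hasDerivAt_secant : HasDerivAt (secant F p q) (slope F p q) x := by
  have h := (((hasDerivAt_id x).sub_const p).const_mul (slope F p q)).const_add (F p)
  rwa [mul_one] at h

lemma le_secant_of_convexOn (hF : ConvexOn ℝ s F) (hp : p ∈ s) (hq : q ∈ s)
    (hx : x ∈ Icc p q) : F x ≤ secant F p q x := by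
  rcases hx.1.eq_or_lt with rfl | hpx
  · rw [secant_left]
  have h_slope : slope F p x ≤ slope F p q :=
    hF.slope_mono hp ⟨hF.1.ordConnected.out hp hq hx, hpx.ne'⟩ ⟨hq, (hpx.trans_le hx.2).ne'⟩ hx.2
  rw [← sub_nonneg, secant_sub_eq_mul_slope_sub_slope]
  exact mul_nonneg (sub_nonneg.2 hx.1) (sub_nonneg.2 h_slope)

lemma secant_le_of_convexOn (hF : ConvexOn ℝ s F) (hp : p ∈ s) (hq : q ∈ s) (hx : x ∈ s)
    (hpq : p < q) (hx' : x ∉ Ioo p q) : secant F p q x ≤ F x := by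
  rw [← sub_nonpos, secant_sub_eq_mul_slope_sub_slope]
  rcases lt_trichotomy x p with hxp | rfl | hpx
  · exact mul_nonpos_of_nonpos_of_nonneg (sub_nonpos.2 hxp.le)
      (sub_nonneg.2 (hF.slope_mono hp ⟨hx, hxp.ne⟩ ⟨hq, hpq.ne'⟩ (hxp.trans hpq).le))
  · simp
  · have hqx : q ≤ x := not_lt.1 fun hxq ↦ hx' ⟨hpx, hxq⟩
    exact mul_nonpos_of_nonneg_of_nonpos (sub_nonneg.2 hpx.le)
      (sub_nonpos.2 (hF.slope_mono hp ⟨hq, hpq.ne'⟩ ⟨hx, hpx.ne'⟩ hqx))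

end Secant

/-- `F` is the greatest convex minorant of `Φ` on `s`: the largest function that is convex on `s`
and lies below `Φ` there. The values of `F` outside `s` are unconstrained. -/
structure IsGreatestConvexMinorantOn (s : Set ℝ) (Φ F : ℝ → ℝ) : Prop where
  convexOn : ConvexOn ℝ s F
  le : ∀ z ∈ s, F z ≤ Φ z
  greatest : ∀ ρ : ℝ → ℝ, ConvexOn ℝ s ρ → (∀ z ∈ s, ρ z ≤ Φ z) → ∀ z ∈ s, ρ z ≤ F z

lemma exists_sub_mul_dist_le_of_lowerSemicontinuousWithinAt {X : Type*} [PseudoMetricSpace X]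
    {s : Set X} {Φ : X → ℝ} {c : X} {ε : ℝ} (hbdd : BddBelow (Φ '' s))
    (hΦ : LowerSemicontinuousWithinAt Φ s c) (hε : 0 < ε) :
    ∃ K, 0 ≤ K ∧ ∀ z ∈ s, Φ c - ε - K * dist z c ≤ Φ z := by
  obtain ⟨m, hm⟩ := hbdd
  obtain ⟨δ, hδ, hball⟩ := Metric.mem_nhdsWithin_iff.1 (hΦ (Φ c - ε) (sub_lt_self _ hε))
  have hK : 0 ≤ |Φ c - ε - m| / δ := by positivity
  refine ⟨|Φ c - ε - m| / δ, hK, fun z hz ↦ ?_⟩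
  rcases lt_or_ge (dist z c) δ with hnear | hfar
  · have hlt : Φ c - ε < Φ z := hball ⟨hnear, hz⟩
    linarith [mul_nonneg hK (dist_nonneg (x := z) (y := c))]
  · calc Φ c - ε - |Φ c - ε - m| / δ * dist z c
        ≤ Φ c - ε - |Φ c - ε - m| / δ * δ := by gcongr
      _ = Φ c - ε - |Φ c - ε - m| := by rw [div_mul_cancel₀ _ hδ.ne']
      _ ≤ m := by linarith [le_abs_self (Φ c - ε - m)]
      _ ≤ Φ z := hm (mem_image_of_mem Φ hz)

lemma concaveOn_abs_sub_left (a b : ℝ) : ConcaveOn ℝ (Icc a b) fun z ↦ |z - a| :=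
  ((concaveOn_id (convex_Icc a b)).add_const (-a)).congr fun z hz ↦ by
    rw [abs_of_nonneg (sub_nonneg.2 hz.1), sub_eq_add_neg]; rfl

lemma concaveOn_abs_sub_right (a b : ℝ) : ConcaveOn ℝ (Icc a b) fun z ↦ |z - b| :=
  ((convexOn_id (convex_Icc a b)).neg.add_const b).congr fun z hz ↦ by
    rw [abs_of_nonpos (sub_nonpos.2 hz.2), neg_sub, sub_eq_neg_add]; rfl

namespace IsGreatestConvexMinorantOn

variable {s : Set ℝ} {Φ F : ℝ → ℝ} {a b c : ℝ}

lemma tendsto_nhdsWithin (hF : IsGreatestConvexMinorantOn s Φ F) (hbdd : BddBelow (Φ '' s))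
    (hΦ : ContinuousWithinAt Φ s c) (hc : ConcaveOn ℝ s fun z ↦ |z - c|) :
    Tendsto F (𝓝[s] c) (𝓝 (Φ c)) := by
  rw [tendsto_order]
  refine ⟨fun y hy ↦ ?_, fun y hy ↦ ?_⟩
  · obtain ⟨d, hyd, hdc⟩ := exists_between hy
    obtain ⟨K, hK, hle⟩ := exists_sub_mul_dist_le_of_lowerSemicontinuousWithinAt hbdd
      hΦ.lowerSemicontinuousWithinAt (sub_pos.2 hdc)
    have h_cone : ConvexOn ℝ s fun z ↦ d - K * |z - c| :=
      ((hc.smul hK).neg.add_const d).congr fun z _ ↦ by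
        simp only [Pi.neg_apply, Pi.add_apply, smul_eq_mul]; ring
    have h_cone_le : ∀ z ∈ s, d - K * |z - c| ≤ F z :=
      hF.greatest _ h_cone fun z hz ↦ by simpa [Real.dist_eq] using hle z hz
    have h_lim : Tendsto (fun z ↦ d - K * |z - c|) (𝓝[s] c) (𝓝 d) := by
      have h_cont : Continuous fun z ↦ d - K * |z - c| := by fun_prop
      simpa using (h_cont.tendsto c).mono_left nhdsWithin_le_nhds
    filter_upwards [h_lim.eventually_const_lt hyd, self_mem_nhdsWithin] with z hyz hz
    exact hyz.trans_le (h_cone_le z hz)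
  · filter_upwards [hΦ.eventually_lt_const hy, self_mem_nhdsWithin] with z hzy hz
    exact (hF.le z hz).trans_lt hzy

lemma apply_eq (hF : IsGreatestConvexMinorantOn s Φ F) (hbdd : BddBelow (Φ '' s))
    (hΦ : ContinuousWithinAt Φ s c) (hc : ConcaveOn ℝ s fun z ↦ |z - c|) (hcs : c ∈ s) :
    F c = Φ c :=
  tendsto_nhds_unique (tendsto_pure_nhds F c)
    ((hF.tendsto_nhdsWithin hbdd hΦ hc).mono_left (pure_le_nhdsWithin hcs))

lemma left_eq (hF : IsGreatestConvexMinorantOn (Icc a b) Φ F) (hΦ : ContinuousOn Φ (Icc a b))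
    (hab : a ≤ b) : F a = Φ a :=
  hF.apply_eq (isCompact_Icc.bddBelow_image hΦ) (hΦ a (left_mem_Icc.2 hab))
    (concaveOn_abs_sub_left a b) (left_mem_Icc.2 hab)

lemma right_eq (hF : IsGreatestConvexMinorantOn (Icc a b) Φ F) (hΦ : ContinuousOn Φ (Icc a b))
    (hab : a ≤ b) : F b = Φ b :=
  hF.apply_eq (isCompact_Icc.bddBelow_image hΦ) (hΦ b (right_mem_Icc.2 hab))
    (concaveOn_abs_sub_right a b) (right_mem_Icc.2 hab)

lemma continuousOn (hF : IsGreatestConvexMinorantOn (Icc a b) Φ F)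
    (hΦ : ContinuousOn Φ (Icc a b)) : ContinuousOn F (Icc a b) := by
  intro c hc
  have hbdd := isCompact_Icc.bddBelow_image hΦ
  have hab := hc.1.trans hc.2
  rcases hc.1.eq_or_lt with rfl | hac
  · rw [ContinuousWithinAt, hF.left_eq hΦ hab]
    exact hF.tendsto_nhdsWithin hbdd (hΦ a hc) (concaveOn_abs_sub_left a b)
  rcases hc.2.eq_or_lt with rfl | hcb
  · rw [ContinuousWithinAt, hF.right_eq hΦ hab]
    exact hF.tendsto_nhdsWithin hbdd (hΦ c hc) (concaveOn_abs_sub_right a c)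
  · have h_int := hF.convexOn.continuousOn_interior
    rw [interior_Icc] at h_int
    exact (h_int.continuousAt (Ioo_mem_nhds hac hcb)).continuousWithinAt

/-- Near `c` a horizontal line separates `F` from `Φ`, so there a short secant of `F` stays below
`Φ`; elsewhere it stays below `F` by convexity. -/
lemma exists_eventuallyEq_secant (hF : IsGreatestConvexMinorantOn s Φ F) (hc : c ∈ interior s)
    (hΦ : LowerSemicontinuousAt Φ c) (hlt : F c < Φ c) :
    ∃ p q, F =ᶠ[𝓝 c] secant F p q := by
  have hFc : ContinuousAt F c :=
    hF.convexOn.continuousOn_interior.continuousAt (isOpen_interior.mem_nhds hc)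
  obtain ⟨d, hFd, hdΦ⟩ := exists_between hlt
  have h_sep : ∀ᶠ x in 𝓝 c, F x < d ∧ d < Φ x ∧ x ∈ s :=
    (hFc.eventually_lt_const hFd).and ((hΦ d hdΦ).and (mem_interior_iff_mem_nhds.1 hc))
  obtain ⟨r, hr, hball⟩ := Metric.nhds_basis_closedBall.eventually_iff.1 h_sep
  simp only [Real.closedBall_eq_Icc] at hball
  have hpq : c - r < c + r := by linarith
  obtain ⟨hFp, -, hp⟩ := hball (left_mem_Icc.2 hpq.le)
  obtain ⟨hFq, -, hq⟩ := hball (right_mem_Icc.2 hpq.le)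
  have h_le : ∀ z ∈ s, secant F (c - r) (c + r) z ≤ Φ z := by
    intro z hz
    by_cases hzpq : z ∈ Ioo (c - r) (c + r)
    · calc secant F (c - r) (c + r) z
          ≤ max (secant F (c - r) (c + r) (c - r)) (secant F (c - r) (c + r) (c + r)) :=
            (convexOn_secant convex_univ).le_max_of_mem_Icc trivial trivial
              (Ioo_subset_Icc_self hzpq)
        _ ≤ d := by rw [secant_left, secant_right]; exact (max_lt hFp hFq).le
        _ ≤ Φ z := (hball (Ioo_subset_Icc_self hzpq)).2.1.le
    · exact (secant_le_of_convexOn hF.convexOn hp hq hz hpq hzpq).trans (hF.le z hz)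
  refine ⟨c - r, c + r, ?_⟩
  filter_upwards [Icc_mem_nhds (sub_lt_self c hr) (lt_add_of_pos_right c hr)] with x hx
  exact (le_secant_of_convexOn hF.convexOn hp hq hx).antisymm
    (hF.greatest _ (convexOn_secant hF.convexOn.1) h_le x (hball hx).2.2)

lemma eventuallyConst_derivWithin_Ici (hF : IsGreatestConvexMinorantOn s Φ F)
    (hc : c ∈ interior s) (hΦ : LowerSemicontinuousAt Φ c) (hlt : F c < Φ c) :
    EventuallyConst (fun x ↦ derivWithin F (Ici x) x) (𝓝 c) := by
  obtain ⟨p, q, hFpq⟩ := hF.exists_eventuallyEq_secant hc hΦ hlt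
  refine eventuallyConst_iff_exists_eventuallyEq.2 ⟨slope F p q, ?_⟩
  filter_upwards [hFpq.eventuallyEq_nhds] with x hx
  exact (hasDerivAt_secant.congr_of_eventuallyEq hx).hasDerivWithinAt.derivWithin
    (uniqueDiffOn_Ici x x self_mem_Ici)

end IsGreatestConvexMinorantOn

section RightDerivative

variable {F g : ℝ → ℝ} {a b m : ℝ}

lemma integrableOn_deriv_right_of_forall_ge (hFc : ContinuousOn F (Icc a b))
    (hder : ∀ x ∈ Ioo a b, HasDerivWithinAt F (g x) (Ioi x) x) (hm : ∀ x ∈ Ioo a b, m ≤ g x) :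
    IntegrableOn g (Ioc a b) := by
  have h_shift : IntegrableOn (fun x ↦ g x - m) (Ioc a b) := by
    refine intervalIntegral.integrableOn_deriv_right_of_nonneg (g := fun x ↦ F x - m * x)
      (hFc.sub (by fun_prop)) (fun x hx ↦ ?_) fun x hx ↦ sub_nonneg.2 (hm x hx)
    have h := (hder x hx).sub ((hasDerivWithinAt_id x (Ioi x)).const_mul m)
    rwa [mul_one] at h
  have h_const : IntegrableOn (fun _ ↦ m) (Ioc a b) := integrableOn_const measure_Ioc_lt_top.ne
  exact (h_shift.add h_const).congr_fun (fun x _ ↦ sub_add_cancel (g x) m) measurableSet_Ioc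

lemma integrableOn_deriv_right_of_forall_le (hFc : ContinuousOn F (Icc a b))
    (hder : ∀ x ∈ Ioo a b, HasDerivWithinAt F (g x) (Ioi x) x) (hm : ∀ x ∈ Ioo a b, g x ≤ m) :
    IntegrableOn g (Ioc a b) := by
  have h_neg : IntegrableOn (-g) (Ioc a b) :=
    integrableOn_deriv_right_of_forall_ge hFc.neg (fun x hx ↦ (hder x hx).neg)
      fun x hx ↦ neg_le_neg (hm x hx)
  simpa using h_neg.neg

lemma integrableOn_deriv_right_of_monotoneOn (hFc : ContinuousOn F (Icc a b))
    (hder : ∀ x ∈ Ioo a b, HasDerivWithinAt F (g x) (Ioi x) x) (hg : MonotoneOn g (Ioo a b)) :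
    IntegrableOn g (Ioc a b) := by
  rcases le_or_gt b a with hba | hab
  · simp [Ioc_eq_empty_of_le hba]
  obtain ⟨c, hac, hcb⟩ := exists_between hab
  rw [← Ioc_union_Ioc_eq_Ioc hac.le hcb.le]
  refine .union
    (integrableOn_deriv_right_of_forall_le (m := g c) (hFc.mono (Icc_subset_Icc_right hcb.le))
      (fun x hx ↦ hder x ⟨hx.1, hx.2.trans hcb⟩)
      fun x hx ↦ hg ⟨hx.1, hx.2.trans hcb⟩ ⟨hac, hcb⟩ hx.2.le)
    (integrableOn_deriv_right_of_forall_ge (m := g c) (hFc.mono (Icc_subset_Icc_left hac.le))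
      (fun x hx ↦ hder x ⟨hac.trans hx.1, hx.2⟩)
      fun x hx ↦ hg ⟨hac, hcb⟩ ⟨hac.trans hx.1, hx.2⟩ hx.1.le)

lemma monotoneOn_derivWithin_Ici_of_convexOn (hF : ConvexOn ℝ (Icc a b) F) :
    MonotoneOn (fun x ↦ derivWithin F (Ici x) x) (Ioo a b) := by
  simpa only [derivWithin_Ioi_eq_Ici, interior_Icc] using hF.monotoneOn_rightDeriv

lemma hasDerivWithinAt_derivWithin_Ici_of_convexOn (hF : ConvexOn ℝ (Icc a b) F) {x : ℝ}
    (hx : x ∈ Ioo a b) : HasDerivWithinAt F (derivWithin F (Ici x) x) (Ioi x) x := by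
  rw [← derivWithin_Ioi_eq_Ici]
  exact hF.hasDerivWithinAt_rightDeriv_of_mem_interior (by rwa [interior_Icc])

lemma integrableOn_derivWithin_Ici_of_convexOn (hF : ConvexOn ℝ (Icc a b) F)
    (hFc : ContinuousOn F (Icc a b)) :
    IntegrableOn (fun x ↦ derivWithin F (Ici x) x) (Ioc a b) :=
  integrableOn_deriv_right_of_monotoneOn hFc
    (fun _ ↦ hasDerivWithinAt_derivWithin_Ici_of_convexOn hF)
    (monotoneOn_derivWithin_Ici_of_convexOn hF)

lemma setIntegral_derivWithin_Ici_of_convexOn (hab : a ≤ b) (hF : ConvexOn ℝ (Icc a b) F)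
    (hFc : ContinuousOn F (Icc a b)) :
    ∫ x in Ioo a b, derivWithin F (Ici x) x = F b - F a := by
  rw [← integral_Ioc_eq_integral_Ioo, ← intervalIntegral.integral_of_le hab]
  exact intervalIntegral.integral_eq_sub_of_hasDeriv_right_of_le hab hFc
    (fun _ ↦ hasDerivWithinAt_derivWithin_Ici_of_convexOn hF)
    ((intervalIntegrable_iff_integrableOn_Ioc_of_le hab).2
      (integrableOn_derivWithin_Ici_of_convexOn hF hFc))

end RightDerivative

section Pythagoras

variable {α : Type*} [MeasurableSpace α] {μ : Measure α}

lemma lintegral_sq_add_lintegral_sq_le_of_integral_mul_nonneg {u v : α → ℝ}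
    (hu : AEMeasurable u μ) (hv : AEMeasurable v μ) (huv : Integrable (fun x ↦ u x * v x) μ)
    (h_nonneg : 0 ≤ ∫ x, u x * v x ∂μ) :
    ∫⁻ x, ENNReal.ofReal (u x ^ 2) ∂μ + ∫⁻ x, ENNReal.ofReal (v x ^ 2) ∂μ ≤
      ∫⁻ x, ENNReal.ofReal ((u x + v x) ^ 2) ∂μ := by
  rcases eq_or_ne (∫⁻ x, ENNReal.ofReal ((u x + v x) ^ 2) ∂μ) ⊤ with h_top | h_top
  · exact h_top ▸ le_top
  have h_sum : Integrable (fun x ↦ (u x + v x) ^ 2) μ :=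
    (lintegral_ofReal_ne_top_iff_integrable ((hu.add hv).pow_const 2).aestronglyMeasurable
      (.of_forall fun x ↦ sq_nonneg _)).1 h_top
  have h_expand : ∀ x, u x ^ 2 + v x ^ 2 = (u x + v x) ^ 2 - 2 * (u x * v x) := fun x ↦ by ring
  have h_sq : Integrable (fun x ↦ u x ^ 2 + v x ^ 2) μ := by
    simp_rw [h_expand]
    exact h_sum.sub (huv.const_mul 2)
  calc ∫⁻ x, ENNReal.ofReal (u x ^ 2) ∂μ + ∫⁻ x, ENNReal.ofReal (v x ^ 2) ∂μ
      = ∫⁻ x, ENNReal.ofReal (u x ^ 2 + v x ^ 2) ∂μ := by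
        rw [← lintegral_add_left' (hu.pow_const 2).ennreal_ofReal]
        simp_rw [ENNReal.ofReal_add (sq_nonneg _) (sq_nonneg _)]
    _ = ENNReal.ofReal (∫ x, (u x ^ 2 + v x ^ 2) ∂μ) :=
        (ofReal_integral_eq_lintegral_ofReal h_sq (.of_forall fun x ↦ by positivity)).symm
    _ ≤ ENNReal.ofReal (∫ x, (u x + v x) ^ 2 ∂μ) := by
        simp_rw [h_expand]
        rw [integral_sub h_sum (huv.const_mul 2), integral_const_mul]
        exact ENNReal.ofReal_le_ofReal (by linarith)
    _ = ∫⁻ x, ENNReal.ofReal ((u x + v x) ^ 2) ∂μ :=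
        ofReal_integral_eq_lintegral_ofReal h_sum (.of_forall fun x ↦ sq_nonneg _)

/-- The truncation of `y` to `[-n, n]`; it makes the right derivative of a convex function bounded
without losing monotonicity. -/
def clamp (n : ℕ) (y : ℝ) : ℝ := max (-n) (min n y)

lemma clamp_mem_Icc (n : ℕ) (y : ℝ) : clamp n y ∈ Icc (-n : ℝ) n :=
  ⟨le_max_left _ _, max_le (neg_le_self n.cast_nonneg) (min_le_left _ _)⟩

lemma monotone_clamp (n : ℕ) : Monotone (clamp n) :=
  fun _ _ hxy ↦ max_le_max_left _ (min_le_min_left _ hxy)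

lemma eventually_clamp_eq (y : ℝ) : ∀ᶠ n : ℕ in atTop, clamp n y = y := by
  filter_upwards [tendsto_natCast_atTop_atTop.eventually_ge_atTop |y|] with n hn
  rw [clamp, min_eq_right (abs_le.1 hn).2, max_eq_right (abs_le.1 hn).1]

lemma sub_clamp_mul_clamp_sub_nonneg {n : ℕ} {y z : ℝ} (hz : z ∈ Icc (-n : ℝ) n) :
    0 ≤ (y - clamp n y) * (clamp n y - z) := by
  obtain ⟨hz₁, hz₂⟩ := hz
  rcases le_total (n : ℝ) y with hny | hyn
  · have h_clamp : clamp n y = n := by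
      rw [clamp, min_eq_left hny, max_eq_right (neg_le_self n.cast_nonneg)]
    rw [h_clamp]
    exact mul_nonneg (sub_nonneg.2 hny) (sub_nonneg.2 hz₂)
  rw [clamp, min_eq_right hyn]
  rcases le_total (-n : ℝ) y with hny | hyn'
  · rw [max_eq_right hny, sub_self, zero_mul]
  · rw [max_eq_left hyn']
    exact mul_nonneg_of_nonpos_of_nonpos (sub_nonpos.2 hyn') (sub_nonpos.2 hz₁)

variable {f g h : α → ℝ}

lemma integral_sub_clamp_mul_clamp_sub_nonneg [IsFiniteMeasure μ] {n : ℕ} (hf : Integrable f μ)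
    (hg : Integrable g μ) (hh : AEMeasurable h μ) (hhn : ∀ᵐ x ∂μ, h x ∈ Icc (-n : ℝ) n)
    (h_le : ∫ x, (f x - g x) * h x ∂μ ≤ 0)
    (h_clamp : ∫ x, (f x - g x) * clamp n (g x) ∂μ = 0) :
    Integrable (fun x ↦ (f x - clamp n (g x)) * (clamp n (g x) - h x)) μ ∧
      0 ≤ ∫ x, (f x - clamp n (g x)) * (clamp n (g x) - h x) ∂μ := by
  have hc : AEStronglyMeasurable (fun x ↦ clamp n (g x)) μ :=
    ((monotone_clamp n).measurable.comp_aemeasurable hg.aemeasurable).aestronglyMeasurable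
  have hh' := hh.aestronglyMeasurable
  have hc_bdd : ∀ᵐ x ∂μ, ‖clamp n (g x)‖ ≤ n :=
    .of_forall fun x ↦ abs_le.2 (clamp_mem_Icc n (g x))
  have hh_bdd : ∀ᵐ x ∂μ, ‖h x‖ ≤ n := hhn.mono fun x hx ↦ abs_le.2 hx
  have hd_bdd : ∀ᵐ x ∂μ, ‖clamp n (g x) - h x‖ ≤ n + n := by
    filter_upwards [hc_bdd, hh_bdd] with x hcx hhx
    exact (norm_sub_le _ _).trans (add_le_add hcx hhx)
  have hfg := hf.sub hg
  have h_int : Integrable (fun x ↦ (f x - g x) * (clamp n (g x) - h x)) μ :=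
    hfg.mul_bdd (hc.sub hh') hd_bdd
  have h_int' : Integrable (fun x ↦ (f x - clamp n (g x)) * (clamp n (g x) - h x)) μ :=
    (hf.sub (.of_bound hc n hc_bdd)).mul_bdd (hc.sub hh') hd_bdd
  refine ⟨h_int', ?_⟩
  calc 0 ≤ ∫ x, (f x - g x) * clamp n (g x) ∂μ - ∫ x, (f x - g x) * h x ∂μ := by
        rw [h_clamp]; linarith
    _ = ∫ x, (f x - g x) * (clamp n (g x) - h x) ∂μ := by
        simp_rw [mul_sub]
        exact (integral_sub (hfg.mul_bdd hc hc_bdd) (hfg.mul_bdd hh' hh_bdd)).symm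
    _ ≤ ∫ x, (f x - clamp n (g x)) * (clamp n (g x) - h x) ∂μ := by
        refine integral_mono_ae h_int h_int' ?_
        filter_upwards [hhn] with x hx
        linarith [sub_clamp_mul_clamp_sub_nonneg (y := g x) hx]

lemma lintegral_le_of_eventually_lintegral_le {C : ENNReal} {G : α → ENNReal}
    {Gn : ℕ → α → ENNReal} (hGn : ∀ n, AEMeasurable (Gn n) μ)
    (hlim : ∀ᵐ x ∂μ, Tendsto (fun n ↦ Gn n x) atTop (𝓝 (G x)))
    (hle : ∀ᶠ n in atTop, ∫⁻ x, Gn n x ∂μ ≤ C) : ∫⁻ x, G x ∂μ ≤ C := calc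
  ∫⁻ x, G x ∂μ = ∫⁻ x, liminf (fun n ↦ Gn n x) atTop ∂μ :=
    lintegral_congr_ae (hlim.mono fun _ hx ↦ hx.liminf_eq.symm)
  _ ≤ liminf (fun n ↦ ∫⁻ x, Gn n x ∂μ) atTop := lintegral_liminf_le' hGn
  _ ≤ C := liminf_le_of_frequently_le' hle.frequently

lemma lintegral_sq_sub_add_lintegral_sq_sub_le_of_clamp [IsFiniteMeasure μ] {l u : ℝ}
    (hf : Integrable f μ) (hg : Integrable g μ) (hh : AEMeasurable h μ)
    (hb : ∀ᵐ x ∂μ, h x ∈ Icc l u) (h_le : ∫ x, (f x - g x) * h x ∂μ ≤ 0)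
    (h_clamp : ∀ n, ∫ x, (f x - g x) * clamp n (g x) ∂μ = 0) :
    ∫⁻ x, ENNReal.ofReal ((f x - g x) ^ 2) ∂μ + ∫⁻ x, ENNReal.ofReal ((g x - h x) ^ 2) ∂μ ≤
      ∫⁻ x, ENNReal.ofReal ((f x - h x) ^ 2) ∂μ := by
  have hfm := hf.aemeasurable
  have hgm := hg.aemeasurable
  have hc (n : ℕ) : AEMeasurable (fun x ↦ clamp n (g x)) μ :=
    (monotone_clamp n).measurable.comp_aemeasurable hgm
  have hfg : AEMeasurable (fun x ↦ ENNReal.ofReal ((f x - g x) ^ 2)) μ :=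
    ((hfm.sub hgm).pow_const 2).ennreal_ofReal
  have hfc (n : ℕ) : AEMeasurable (fun x ↦ ENNReal.ofReal ((f x - clamp n (g x)) ^ 2)) μ :=
    ((hfm.sub (hc n)).pow_const 2).ennreal_ofReal
  have hch (n : ℕ) : AEMeasurable (fun x ↦ ENNReal.ofReal ((clamp n (g x) - h x) ^ 2)) μ :=
    (((hc n).sub hh).pow_const 2).ennreal_ofReal
  rw [← lintegral_add_left' hfg]
  refine lintegral_le_of_eventually_lintegral_le (fun n ↦ (hfc n).add (hch n))
    (.of_forall fun x ↦ ?_) ?_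
  · refine tendsto_const_nhds.congr' ?_
    filter_upwards [eventually_clamp_eq (g x)] with n hn
    simp only [Pi.add_apply, hn]
  · filter_upwards [tendsto_natCast_atTop_atTop.eventually_ge_atTop (max (-l) u)] with n hn
    obtain ⟨h_int, h_nonneg⟩ := integral_sub_clamp_mul_clamp_sub_nonneg hf hg hh
      (hb.mono fun x hx ↦ ⟨neg_le.1 (((neg_le_neg hx.1).trans (le_max_left _ _)).trans hn),
        (hx.2.trans (le_max_right _ _)).trans hn⟩) h_le (h_clamp n)
    have h_pyth := lintegral_sq_add_lintegral_sq_le_of_integral_mul_nonneg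
      (hfm.sub (hc n)) ((hc n).sub hh) h_int h_nonneg
    simp only [Pi.sub_apply, sub_add_sub_cancel] at h_pyth
    exact (lintegral_add_left' (hfc n) _).trans_le h_pyth

end Pythagoras

namespace IsGreatestConvexMinorantOn

variable {φ F : ℝ → ℝ} {a b c : ℝ}

lemma setIntegral_sub_derivWithin_Ici
    (hF : IsGreatestConvexMinorantOn (Icc a b) (fun z ↦ ∫ x in Icc a z, φ x) F)
    (hφ : IntegrableOn φ (Icc a b)) (hc : c ∈ Icc a b) :
    ∫ x in Ioo c b, (φ x - derivWithin F (Ici x) x) = F c - ∫ x in Icc a c, φ x := by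
  have hΦ := intervalIntegral.continuousOn_primitive_Icc hφ
  have hsub : Icc c b ⊆ Icc a b := Icc_subset_Icc_left hc.1
  have hFconv := hF.convexOn.subset hsub (convex_Icc c b)
  have hFcont := (hF.continuousOn hΦ).mono hsub
  have hφ_split : ∫ x in Icc a b, φ x =
      (∫ x in Icc a c, φ x) + ∫ x in Ioc c b, φ x := by
    rw [← Icc_union_Ioc_eq_Icc hc.1 hc.2]
    exact setIntegral_union (disjoint_left.2 fun x hx hx' ↦ hx.2.not_gt hx'.1) measurableSet_Ioc
      (hφ.mono_set (Icc_subset_Icc_right hc.2))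
      (hφ.mono_set (Ioc_subset_Icc_self.trans hsub))
  rw [integral_sub (hφ.mono_set (Ioo_subset_Icc_self.trans hsub))
      ((integrableOn_derivWithin_Ici_of_convexOn hFconv hFcont).mono_set Ioo_subset_Ioc_self),
    setIntegral_derivWithin_Ici_of_convexOn hc.2 hFconv hFcont,
    hF.right_eq hΦ (hc.1.trans hc.2), hφ_split, integral_Ioc_eq_integral_Ioo]
  ring

end IsGreatestConvexMinorantOn

theorem L2_projection_lemma_general {a b : ℝ} {φ F ψ : ℝ → ℝ} (hφ : IntegrableOn φ (Icc a b))
    (hF : IsGreatestConvexMinorantOn (Icc a b) (fun z ↦ ∫ x in Icc a z, φ x) F)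
    (hψ : MonotoneOn ψ (Icc a b)) :
    (∫⁻ x in Icc a b, ENNReal.ofReal ((φ x - derivWithin F (Ici x) x) ^ 2)) +
        ∫⁻ x in Icc a b, ENNReal.ofReal ((derivWithin F (Ici x) x - ψ x) ^ 2) ≤
      ∫⁻ x in Icc a b, ENNReal.ofReal ((φ x - ψ x) ^ 2) := by
  rcases lt_or_ge b a with hba | hab
  · simp [Icc_eq_empty_of_lt hba]
  rw [← restrict_Ioo_eq_restrict_Icc]
  have hΦ := intervalIntegral.continuousOn_primitive_Icc hφ
  have hφ' := hφ.mono_set Ioo_subset_Icc_self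
  have hg := (integrableOn_derivWithin_Ici_of_convexOn hF.convexOn (hF.continuousOn hΦ)).mono_set
    Ioo_subset_Ioc_self
  have hg_mono := monotoneOn_derivWithin_Ici_of_convexOn hF.convexOn
  have hψ_mono := hψ.mono Ioo_subset_Icc_self
  have hψ_mem : ∀ x ∈ Ioo a b, ψ x ∈ Icc (ψ a) (ψ b) := fun x hx ↦
    hψ.mapsTo_Icc (Ioo_subset_Icc_self hx)
  have htail (c) (hc : c ∈ Icc a b) := hF.setIntegral_sub_derivWithin_Ici hφ hc
  have h_total : ∫ x in Ioo a b, (φ x - derivWithin F (Ici x) x) = 0 := by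
    rw [htail a (left_mem_Icc.2 hab), hF.left_eq hΦ hab, sub_self]
  refine lintegral_sq_sub_add_lintegral_sq_sub_le_of_clamp hφ' hg
    (aemeasurable_restrict_of_monotoneOn measurableSet_Ioo hψ_mono)
    ((ae_restrict_mem measurableSet_Ioo).mono hψ_mem) ?_ fun n ↦ ?_
  · refine integral_mul_nonpos_of_monotoneOn hab (hφ'.sub hg) h_total (fun c hc ↦ ?_)
      hψ_mono hψ_mem
    exact (htail c hc).trans_le (sub_nonpos.2 (hF.le c hc))
  · refine integral_mul_eq_zero_of_monotoneOn hab (hφ'.sub hg) h_total (fun c hc hne ↦ ?_)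
      ((monotone_clamp n).comp_monotoneOn hg_mono) fun x _ ↦ clamp_mem_Icc n _
    rw [htail c (Ioo_subset_Icc_self hc)] at hne
    refine (hF.eventuallyConst_derivWithin_Ici (by rwa [interior_Icc]) ?_ ?_).comp (clamp n)
    · exact (hΦ.continuousAt (Icc_mem_nhds hc.1 hc.2)).lowerSemicontinuousAt
    · exact (hF.le c (Ioo_subset_Icc_self hc)).lt_of_ne (sub_ne_zero.1 hne)

theorem L2_projection_lemma (M : ℝ) (hM : 0 < M)
    (φ : ℝ → ℝ) (hmeas : Measurable φ)
    (hnonneg : ∀ x ∈ Icc (0 : ℝ) M, 0 ≤ φ x)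
    (hcont : ∀ᵐ x ∂(volume.restrict (Icc (0 : ℝ) M)), ContinuousAt φ x)
    (hint : IntegrableOn φ (Icc (0 : ℝ) M))
    (Φstar : ℝ → ℝ)
    (hconv : ConvexOn ℝ (Icc (0 : ℝ) M) Φstar)
    (hminor : ∀ z ∈ Icc (0 : ℝ) M, Φstar z ≤ ∫ x in Icc (0 : ℝ) z, φ x)
    (hgreatest : ∀ ρ : ℝ → ℝ, ConvexOn ℝ (Icc (0 : ℝ) M) ρ →
      (∀ z ∈ Icc (0 : ℝ) M, ρ z ≤ ∫ x in Icc (0 : ℝ) z, φ x) →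
      ∀ z ∈ Icc (0 : ℝ) M, ρ z ≤ Φstar z)
    (ψ : ℝ → ℝ) (hψmono : MonotoneOn ψ (Icc (0 : ℝ) M))
    (hψrc : ∀ x ∈ Ico (0 : ℝ) M, ContinuousWithinAt ψ (Ici x) x)
    (hψnn : ∀ x ∈ Icc (0 : ℝ) M, 0 ≤ ψ x) :
    (∫⁻ x in Icc (0 : ℝ) M,
        ENNReal.ofReal ((φ x - derivWithin Φstar (Ici x) x) ^ 2)) +
      ∫⁻ x in Icc (0 : ℝ) M,
        ENNReal.ofReal ((derivWithin Φstar (Ici x) x - ψ x) ^ 2)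
      ≤ ∫⁻ x in Icc (0 : ℝ) M, ENNReal.ofReal ((φ x - ψ x) ^ 2) := by
  exact L2_projection_lemma_general hint ⟨hconv, hminor, hgreatest⟩ hψmono
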